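/- arXiv:1408.2157 — 3 statements merged into one kernel-verified Lean document; each statement's English description precedes it below -/
import Mathlib

section
/- Let c, m, d, k be positive integers with kd ≤ m, and let Γ be a uniformly random function from [cm] × [d] to [m] (all values chosen independently and uniformly). Then the probability that Γ is not a (c,m,d,k)-unique expander is at most Σ_{i=1}^{k} C(cm, i) · C(m, ⌊id/2⌋) · (⌊id/2⌋/m)^{id}. -/
/-!
If a nonempty `S` has no unique neighbor, every `y ∈ Γ(S)` has at least two neighbors in `S`, so
counting the pairs (vertex of `S`, neighbor of it) in two ways gives `2 |Γ(S)| ≤ d |S|`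
(`two_mul_card_neighbors_le`). As `kd ≤ m`, the set `Γ(S)` then lies in some `T ⊆ [m]` of size
exactly `⌊d|S|/2⌋`. For fixed `S` and `T`, all `d|S|` edges leaving `S` land in `T` with
probability `(|T|/m)^(d|S|)` (`uniform_edgesInto`), and a union bound over `|S|`, `S` and `T`
finishes the proof.
-/

/-- The set of neighbors of `S` in the bipartite graph with edge function `Γ`. -/
def expanderNeighbors {L R : Type*} [DecidableEq R] {d : ℕ}
    (Γ : L → Fin d → R) (S : Finset L) : Finset R :=
  S.biUnion fun x => Finset.image (Γ x) Finset.univ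

/-- A bipartite graph given by its edge function `Γ` (left outdegree `d`) is
`k`-unique if every nonempty set `S` of at most `k` left vertices has a right
neighbor with exactly one neighbor in `S`. -/
def IsKUnique {L R : Type*} [DecidableEq R] {d : ℕ}
    (Γ : L → Fin d → R) (k : ℕ) : Prop :=
  ∀ S : Finset L, S.Nonempty → S.card ≤ k →
    ∃ y ∈ expanderNeighbors Γ S,
      (S.filter fun x => ∃ j : Fin d, Γ x j = y).card = 1

/-- The edge functions sending every edge that leaves `S` into `T`. -/
def edgesInto {n d m : ℕ} (S : Finset (Fin n)) (T : Finset (Fin m)) :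
    Finset (Fin n → Fin d → Fin m) :=
  Fintype.piFinset fun x => Fintype.piFinset fun _ => if x ∈ S then T else Finset.univ

lemma mem_edgesInto {n d m : ℕ} {S : Finset (Fin n)} {T : Finset (Fin m)}
    {Γ : Fin n → Fin d → Fin m} : Γ ∈ edgesInto S T ↔ ∀ x ∈ S, ∀ j, Γ x j ∈ T := by
  simp only [edgesInto, Fintype.mem_piFinset]
  refine forall_congr' fun x => ?_
  by_cases hx : x ∈ S <;> simp [hx]

lemma card_edgesInto {n d m : ℕ} (S : Finset (Fin n)) (T : Finset (Fin m)) :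
    (edgesInto (d := d) S T).card = T.card ^ (S.card * d) * m ^ ((n - S.card) * d) := by
  have h : ∀ x : Fin n, (if x ∈ S then T else Finset.univ).card ^ d
      = if x ∈ S then T.card ^ d else m ^ d := fun x => by split_ifs <;> simp
  have hc : (Finset.univ.filter fun x => x ∉ S).card = n - S.card := by
    have : (Finset.univ.filter fun x => x ∉ S) = Sᶜ := by ext; simp
    rw [this, Finset.card_compl, Fintype.card_fin]
  simp only [edgesInto, Fintype.card_piFinset, Finset.prod_const, Finset.card_univ,
    Fintype.card_fin, h]
  rw [Finset.prod_ite, Finset.prod_const, Finset.prod_const, hc, Finset.filter_mem_eq_inter,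
    Finset.univ_inter, ← pow_mul, ← pow_mul, mul_comm d, mul_comm d]

lemma uniform_edgesInto {n d m : ℕ} (hm : 0 < m) (S : Finset (Fin n)) (T : Finset (Fin m)) :
    haveI : Nonempty (Fin m) := ⟨⟨0, hm⟩⟩
    letI : MeasurableSpace (Fin n → Fin d → Fin m) := ⊤
    (PMF.uniformOfFintype (Fin n → Fin d → Fin m)).toMeasure
        (edgesInto (d := d) S T : Set (Fin n → Fin d → Fin m))
      = ((T.card : ENNReal) / (m : ENNReal)) ^ (S.card * d) := by
  let _ : Nonempty (Fin m) := ⟨⟨0, hm⟩⟩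
  let _ : MeasurableSpace (Fin n → Fin d → Fin m) := ⊤
  have hS : S.card ≤ n := by simpa using S.card_le_univ
  have hm0 : (m : ENNReal) ≠ 0 := by exact_mod_cast hm.ne'
  have hmt : (m : ENNReal) ≠ ⊤ := ENNReal.natCast_ne_top m
  have htot : Fintype.card (Fin n → Fin d → Fin m)
      = m ^ (S.card * d) * m ^ ((n - S.card) * d) := by
    rw [← pow_add, ← add_mul, Nat.add_sub_cancel' hS]
    simp [← pow_mul, mul_comm]
  rw [PMF.toMeasure_uniformOfFintype_apply _ (MeasurableSpace.measurableSet_top)]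
  rw [htot]
  simp only [Fintype.card_coe, Finset.coe_sort_coe, card_edgesInto]
  push_cast
  rw [ENNReal.mul_div_mul_right _ _ (pow_ne_zero _ hm0) (ENNReal.pow_ne_top hmt),
    div_eq_mul_inv, div_eq_mul_inv, mul_pow, ENNReal.inv_pow]

/-- Each neighbor of `S` has at least two neighbors in `S`, while each vertex of `S` has at most
`d` neighbors; double counting of the incidences compares the two. -/
lemma two_mul_card_neighbors_le {L R : Type*} [DecidableEq R] {d : ℕ} (Γ : L → Fin d → R)
    (S : Finset L) (h : ∀ y ∈ expanderNeighbors Γ S,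
      (S.filter fun x => ∃ j : Fin d, Γ x j = y).card ≠ 1) :
    (expanderNeighbors Γ S).card * 2 ≤ S.card * d := by
  refine Finset.card_mul_le_card_mul (fun y x => ∃ j : Fin d, Γ x j = y) ?_ ?_
  · intro y hy
    have h1 := h y hy
    have h0 : 0 < (S.filter fun x => ∃ j : Fin d, Γ x j = y).card := by
      simp only [expanderNeighbors, Finset.mem_biUnion, Finset.mem_image, Finset.mem_univ,
        true_and] at hy
      obtain ⟨x, hx, hj⟩ := hy
      exact Finset.card_pos.2 ⟨x, Finset.mem_filter.2 ⟨hx, hj⟩⟩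
    change 2 ≤ (S.filter fun x => ∃ j : Fin d, Γ x j = y).card
    omega
  · intro x _
    calc _ ≤ (Finset.image (Γ x) Finset.univ).card := by
          refine Finset.card_le_card fun y hy => ?_
          simpa using (Finset.mem_filter.1 hy).2
      _ ≤ d := by simpa using Finset.card_image_le (f := Γ x) (s := Finset.univ)

/-- The inclusion behind the union bound: a graph that is not `k`-unique lies in one of the events
`edgesInto S T` with `1 ≤ |S| ≤ k` and `|T| = ⌊d|S|/2⌋`. -/
lemma exists_edgesInto_of_not_isKUnique {n m d k : ℕ} (hkd : k * d ≤ m)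
    {Γ : Fin n → Fin d → Fin m} (h : ¬ IsKUnique Γ k) :
    ∃ i ∈ Finset.Icc 1 k, ∃ S ∈ Finset.powersetCard i (Finset.univ : Finset (Fin n)),
      ∃ T ∈ Finset.powersetCard (i * d / 2) (Finset.univ : Finset (Fin m)),
        Γ ∈ edgesInto S T := by
  unfold IsKUnique at h
  push Not at h
  obtain ⟨S, hne, hSk, hS⟩ := h
  have h2 := two_mul_card_neighbors_le Γ S hS
  have hle : S.card * d ≤ m := (Nat.mul_le_mul_right d hSk).trans hkd
  obtain ⟨T, hST, hT⟩ := Finset.exists_superset_card_eq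
    (s := expanderNeighbors Γ S) (n := S.card * d / 2) (by omega)
    -- this is where `kd ≤ m` makes room for `T`
    (by rw [Fintype.card_fin]; omega)
  refine ⟨S.card, Finset.mem_Icc.2 ⟨hne.card_pos, hSk⟩, S, by simp, T, by simp [hT], ?_⟩
  refine mem_edgesInto.2 fun x hx j => hST ?_
  exact Finset.mem_biUnion.2 ⟨x, hx, Finset.mem_image_of_mem _ (Finset.mem_univ j)⟩

/-- For a uniformly random edge function `Γ : [cm] × [d] → [m]`
(with `kd ≤ m`), the probability that `Γ` is not a `(c,m,d,k)`-unique expander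
is at most `Σ_{i=1}^{k} C(cm,i) · C(m,⌊id/2⌋) · (⌊id/2⌋/m)^{id}`. -/
theorem random_expander_failure_bound
    (c m d k : ℕ) (hc : 0 < c) (hm : 0 < m) (hd : 0 < d) (hk : 0 < k)
    (hkd : k * d ≤ m) :
    haveI : Nonempty (Fin m) := ⟨⟨0, hm⟩⟩
    letI : MeasurableSpace (Fin (c * m) → Fin d → Fin m) := ⊤
    (PMF.uniformOfFintype (Fin (c * m) → Fin d → Fin m)).toMeasure
        {Γ : Fin (c * m) → Fin d → Fin m | ¬ IsKUnique Γ k}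
      ≤ ∑ i ∈ Finset.Icc 1 k,
          (Nat.choose (c * m) i : ENNReal) * (Nat.choose m (i * d / 2) : ENNReal) *
            (((i * d / 2 : ℕ) : ENNReal) / (m : ENNReal)) ^ (i * d) := by
  let _ : Nonempty (Fin m) := ⟨⟨0, hm⟩⟩
  let _ : MeasurableSpace (Fin (c * m) → Fin d → Fin m) := ⊤
  set μ := (PMF.uniformOfFintype (Fin (c * m) → Fin d → Fin m)).toMeasure
  calc μ {Γ | ¬ IsKUnique Γ k}
      ≤ μ (⋃ i ∈ Finset.Icc 1 k,
          ⋃ S ∈ Finset.powersetCard i (Finset.univ : Finset (Fin (c * m))),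
          ⋃ T ∈ Finset.powersetCard (i * d / 2) (Finset.univ : Finset (Fin m)),
            (edgesInto (d := d) S T : Set (Fin (c * m) → Fin d → Fin m))) := by
        refine MeasureTheory.measure_mono fun Γ hΓ => ?_
        simp only [Set.mem_iUnion, exists_prop]
        exact exists_edgesInto_of_not_isKUnique hkd hΓ
    _ ≤ ∑ i ∈ Finset.Icc 1 k,
          ∑ S ∈ Finset.powersetCard i (Finset.univ : Finset (Fin (c * m))),
          ∑ T ∈ Finset.powersetCard (i * d / 2) (Finset.univ : Finset (Fin m)),
            μ (edgesInto (d := d) S T : Set (Fin (c * m) → Fin d → Fin m)) := by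
        refine (MeasureTheory.measure_biUnion_finset_le _ _).trans
          (Finset.sum_le_sum fun i _ => ?_)
        refine (MeasureTheory.measure_biUnion_finset_le _ _).trans
          (Finset.sum_le_sum fun S _ => ?_)
        exact MeasureTheory.measure_biUnion_finset_le _ _
    _ = _ := by
        refine Finset.sum_congr rfl fun i _ => ?_
        have key : ∀ S ∈ Finset.powersetCard i (Finset.univ : Finset (Fin (c * m))),
            ∀ T ∈ Finset.powersetCard (i * d / 2) (Finset.univ : Finset (Fin m)),
            μ (edgesInto (d := d) S T : Set (Fin (c * m) → Fin d → Fin m))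
              = (((i * d / 2 : ℕ) : ENNReal) / (m : ENNReal)) ^ (i * d) := by
          intro S hS T hT
          have h := uniform_edgesInto (d := d) hm S T
          rwa [(Finset.mem_powersetCard.1 hS).2, (Finset.mem_powersetCard.1 hT).2] at h
        rw [Finset.sum_congr rfl fun S hS => Finset.sum_congr rfl (key S hS)]
        simp [Finset.sum_const, Finset.card_powersetCard, mul_assoc]
end

section
/- Let c, m, d, k be positive integers with kd ≤ m. If Σ_{i=1}^{k} C(cm, i) · C(m, ⌊id/2⌋) · (⌊id/2⌋/m)^{id} < 1, then there exists a (c,m,d,k)-unique expander, i.e., an edge function Γ : [cm] × [d] → [m] such that for every nonempty S ⊆ [cm] with |S| ≤ k some y ∈ Γ(S) has exactly one neighbor in S. -/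
/-- The edge functions that send every edge leaving `S` into `T`. -/
def confined {L R : Type*} [Fintype L] [DecidableEq L] [Fintype R] {d : ℕ}
    (S : Finset L) (T : Finset R) : Finset (L → Fin d → R) :=
  Fintype.piFinset fun x => Fintype.piFinset fun _ => if x ∈ S then T else Finset.univ

lemma mem_confined {L R : Type*} [Fintype L] [DecidableEq L] [Fintype R] {d : ℕ}
    {S : Finset L} {T : Finset R} {Γ : L → Fin d → R} :
    Γ ∈ confined S T ↔ ∀ x ∈ S, ∀ j, Γ x j ∈ T := by
  simp only [confined, Fintype.mem_piFinset]
  refine forall_congr' fun x => ?_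
  by_cases hx : x ∈ S <;> simp [hx]

lemma card_confined {L R : Type*} [Fintype L] [DecidableEq L] [Fintype R] [Nonempty R]
    {d : ℕ} (S : Finset L) (T : Finset R) :
    ((confined S T : Finset (L → Fin d → R)).card : ℝ) =
      ((T.card : ℝ) / Fintype.card R) ^ (S.card * d) * Fintype.card (L → Fin d → R) := by
  have hR : (Fintype.card R : ℝ) ≠ 0 := by exact_mod_cast Fintype.card_ne_zero
  have key : ∀ x : L, (((if x ∈ S then T else Finset.univ).card : ℕ) : ℝ) ^ d =
      (if x ∈ S then ((T.card : ℝ) / Fintype.card R) ^ d else 1) * (Fintype.card R : ℝ) ^ d := by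
    intro x
    by_cases hx : x ∈ S
    · simp only [hx, if_true]
      rw [← mul_pow, div_mul_cancel₀ _ hR]
    · simp [hx]
  have h1 : ((confined S T : Finset (L → Fin d → R)).card : ℝ) =
      ∏ x : L, (((if x ∈ S then T else Finset.univ).card : ℕ) : ℝ) ^ d := by
    simp [confined, Fintype.card_piFinset]
  rw [h1, Finset.prod_congr rfl fun x _ => key x, Finset.prod_mul_distrib]
  congr 1
  · rw [Finset.prod_ite_mem, Finset.univ_inter, Finset.prod_const, ← pow_mul, mul_comm]
  · simp

/-- Double counting of the edges leaving `S`: without a unique neighbor, each neighbor of `S` is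
hit by at least two of them. -/
lemma card_neighbors_le {L R : Type*} [DecidableEq R] {d : ℕ}
    (Γ : L → Fin d → R) (S : Finset L)
    (h : ∀ y ∈ expanderNeighbors Γ S, (S.filter fun x => ∃ j : Fin d, Γ x j = y).card ≠ 1) :
    (expanderNeighbors Γ S).card ≤ S.card * d / 2 := by
  classical
  rw [Nat.le_div_iff_mul_le two_pos]
  have hmaps : ∀ e ∈ S ×ˢ (Finset.univ : Finset (Fin d)), Γ e.1 e.2 ∈ expanderNeighbors Γ S := by
    intro e he
    simp only [Finset.mem_product] at he
    simp only [expanderNeighbors, Finset.mem_biUnion, Finset.mem_image]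
    exact ⟨e.1, he.1, e.2, Finset.mem_univ _, rfl⟩
  have hcard : (S ×ˢ (Finset.univ : Finset (Fin d))).card = S.card * d := by simp
  rw [← hcard, Finset.card_eq_sum_card_fiberwise hmaps, ← smul_eq_mul, ← Finset.sum_const]
  refine Finset.sum_le_sum fun y hy => ?_
  have hpos : 0 < (S.filter fun x => ∃ j : Fin d, Γ x j = y).card := by
    simp only [expanderNeighbors, Finset.mem_biUnion, Finset.mem_image] at hy
    obtain ⟨x, hx, j, -, hj⟩ := hy
    exact Finset.card_pos.2 ⟨x, Finset.mem_filter.2 ⟨hx, j, hj⟩⟩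
  -- The fiber over `y` projects onto the neighbors of `y` in `S`; multiple edges only enlarge it.
  have hle : (S.filter fun x => ∃ j : Fin d, Γ x j = y).card ≤
      ((S ×ˢ (Finset.univ : Finset (Fin d))).filter fun e => Γ e.1 e.2 = y).card := by
    refine (Finset.card_le_card ?_).trans (Finset.card_image_le (f := Prod.fst))
    intro x hx
    obtain ⟨hxS, j, hj⟩ := Finset.mem_filter.1 hx
    exact Finset.mem_image.2 ⟨(x, j), by simp [hxS, hj], rfl⟩
  have := h y hy
  omega

/-- Padding the neighborhood to exactly `⌊|S| * d / 2⌋` right vertices makes the confining sets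
range over a family whose size is a binomial coefficient. -/
lemma exists_superset_of_no_unique {L R : Type*} [Fintype R] [DecidableEq R] {d : ℕ}
    (Γ : L → Fin d → R) (S : Finset L) (hS : S.card * d ≤ Fintype.card R)
    (h : ∀ y ∈ expanderNeighbors Γ S, (S.filter fun x => ∃ j : Fin d, Γ x j = y).card ≠ 1) :
    ∃ T : Finset R, T.card = S.card * d / 2 ∧ ∀ x ∈ S, ∀ j, Γ x j ∈ T := by
  obtain ⟨T, hT, hcard⟩ := Finset.exists_superset_card_eq (card_neighbors_le Γ S h)
    ((Nat.div_le_self _ _).trans hS)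
  refine ⟨T, hcard, fun x hx j => hT ?_⟩
  simp only [expanderNeighbors, Finset.mem_biUnion, Finset.mem_image]
  exact ⟨x, hx, j, Finset.mem_univ _, rfl⟩

/-- If `kd ≤ m` and
`Σ_{i=1}^{k} C(cm,i) · C(m,⌊id/2⌋) · (⌊id/2⌋/m)^{id} < 1`, then there exists a
`(c,m,d,k)`-unique expander `Γ : [cm] × [d] → [m]`. -/
theorem exists_unique_expander
    (c m d k : ℕ) (hc : 0 < c) (hm : 0 < m) (hd : 0 < d) (hk : 0 < k)
    (hkd : k * d ≤ m)
    (hsum : ∑ i ∈ Finset.Icc 1 k,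
        (Nat.choose (c * m) i : ℝ) * (Nat.choose m (i * d / 2) : ℝ) *
          (((i * d / 2 : ℕ) : ℝ) / (m : ℝ)) ^ (i * d) < 1) :
    ∃ Γ : Fin (c * m) → Fin d → Fin m, IsKUnique Γ k := by
  classical
  by_contra! hno
  have : Nonempty (Fin m) := ⟨⟨0, hm⟩⟩
  let bad : Finset (Fin (c * m) → Fin d → Fin m) :=
    (Finset.Icc 1 k).biUnion fun i =>
      (Finset.powersetCard i (Finset.univ : Finset (Fin (c * m)))).biUnion fun S =>
        (Finset.powersetCard (i * d / 2) (Finset.univ : Finset (Fin m))).biUnion fun T =>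
          confined S T
  have hbad : bad = Finset.univ := by
    refine Finset.eq_univ_of_forall fun Γ => ?_
    have hΓ := hno Γ
    simp only [IsKUnique] at hΓ
    push Not at hΓ
    obtain ⟨S, hne, hSk, hS⟩ := hΓ
    have hSd : S.card * d ≤ Fintype.card (Fin m) := by
      rw [Fintype.card_fin]
      exact (Nat.mul_le_mul_right d hSk).trans hkd
    obtain ⟨T, hT, hST⟩ := exists_superset_of_no_unique Γ S hSd hS
    simp only [bad, Finset.mem_biUnion, Finset.mem_Icc, Finset.mem_powersetCard]
    exact ⟨S.card, ⟨hne.card_pos, hSk⟩, S, ⟨Finset.subset_univ _, rfl⟩, T,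
      ⟨Finset.subset_univ _, hT⟩, mem_confined.2 hST⟩
  set N : ℝ := ((Fintype.card (Fin (c * m) → Fin d → Fin m) : ℕ) : ℝ) with hN
  have hNpos : 0 < N := by
    rw [hN]
    exact_mod_cast Fintype.card_pos
  have hle : (bad.card : ℝ) ≤ ∑ i ∈ Finset.Icc 1 k,
      ∑ S ∈ Finset.powersetCard i (Finset.univ : Finset (Fin (c * m))),
        ∑ T ∈ Finset.powersetCard (i * d / 2) (Finset.univ : Finset (Fin m)),
          ((confined S T : Finset (Fin (c * m) → Fin d → Fin m)).card : ℝ) := by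
    have : bad.card ≤ ∑ i ∈ Finset.Icc 1 k,
        ∑ S ∈ Finset.powersetCard i (Finset.univ : Finset (Fin (c * m))),
          ∑ T ∈ Finset.powersetCard (i * d / 2) (Finset.univ : Finset (Fin m)),
            (confined S T : Finset (Fin (c * m) → Fin d → Fin m)).card :=
      Finset.card_biUnion_le.trans <| Finset.sum_le_sum fun i _ =>
        Finset.card_biUnion_le.trans <| Finset.sum_le_sum fun S _ => Finset.card_biUnion_le
    exact_mod_cast this
  have heq : (∑ i ∈ Finset.Icc 1 k,
      ∑ S ∈ Finset.powersetCard i (Finset.univ : Finset (Fin (c * m))),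
        ∑ T ∈ Finset.powersetCard (i * d / 2) (Finset.univ : Finset (Fin m)),
          ((confined S T : Finset (Fin (c * m) → Fin d → Fin m)).card : ℝ)) =
      (∑ i ∈ Finset.Icc 1 k,
        (Nat.choose (c * m) i : ℝ) * (Nat.choose m (i * d / 2) : ℝ) *
          (((i * d / 2 : ℕ) : ℝ) / (m : ℝ)) ^ (i * d)) * N := by
    rw [Finset.sum_mul]
    refine Finset.sum_congr rfl fun i _ => ?_
    have hterm : ∀ S ∈ Finset.powersetCard i (Finset.univ : Finset (Fin (c * m))),
        ∀ T ∈ Finset.powersetCard (i * d / 2) (Finset.univ : Finset (Fin m)),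
          ((confined S T : Finset (Fin (c * m) → Fin d → Fin m)).card : ℝ) =
            (((i * d / 2 : ℕ) : ℝ) / (m : ℝ)) ^ (i * d) * N := by
      intro S hS T hT
      rw [card_confined, (Finset.mem_powersetCard.1 hS).2, (Finset.mem_powersetCard.1 hT).2,
        Fintype.card_fin]
    rw [Finset.sum_congr rfl fun S hS => Finset.sum_congr rfl (hterm S hS)]
    simp only [Finset.sum_const, Finset.card_powersetCard, Finset.card_univ, Fintype.card_fin,
      nsmul_eq_mul]
    ring
  rw [hbad, Finset.card_univ, ← hN, heq] at hle
  exact absurd ((mul_lt_iff_lt_one_left hNpos).2 hsum) hle.not_gt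
end

section
/- Let n and m be positive integers. The number of functions f from a set of size 2n to a set of size m such that every fiber f^{-1}(y) has even cardinality is at most (2n−1)!! · m^n, where (2n−1)!! = (2n−1)·(2n−3)···3·1 is the double factorial. Equivalently, if 2n balls are thrown independently and uniformly at random into m bins, the probability that every bin receives an even number of balls is at most (2n−1)!! · (1/m)^n. -/
/-! If every fiber of `f : Fin (N + 2) → Fin m` is even, the fiber through `0` contains a second
point. Deleting both points leaves a function on `Fin N` with even fibers, and `f` is recovered
from the position of the second point (`N + 1` choices), the common value (`m` choices) and the
remaining function. Hence the count for `N + 2` is at most `(N + 1) * m` times the count for `N`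
(`card_evenFiberFunctions_add_two_le`), and iterating from `N = 0` gives `(2n - 1)‼ * m ^ n`. -/

/-- The functions `Fin N → Fin m` all of whose fibers have even cardinality. -/
def evenFiberFunctions (N m : ℕ) : Finset (Fin N → Fin m) :=
  Finset.univ.filter fun f : Fin N → Fin m =>
    ∀ y : Fin m, Even (Finset.univ.filter fun x : Fin N => f x = y).card

theorem card_fiber_succAbove {N m : ℕ} (f : Fin (N + 1) → Fin m) (j : Fin (N + 1)) (y : Fin m) :
    (Finset.univ.filter fun x => f x = y).card =
      (if f j = y then 1 else 0) +
        (Finset.univ.filter fun x => f (j.succAbove x) = y).card := by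
  simp only [Finset.card_filter]
  rw [Fin.sum_univ_succAbove _ j]

theorem card_evenFiberFunctions_add_two_le (N m : ℕ) :
    (evenFiberFunctions (N + 2) m).card ≤ (N + 1) * m * (evenFiberFunctions N m).card := by
  classical
  have hsub : evenFiberFunctions (N + 2) m ⊆
      ((Finset.univ : Finset (Fin (N + 1) × Fin m)) ×ˢ evenFiberFunctions N m).image
        (fun p => (Fin.cons p.1.2 (Fin.insertNth p.1.1 p.1.2 p.2 : Fin (N + 1) → Fin m) :
          Fin (N + 2) → Fin m)) := by
    intro f hf
    simp only [evenFiberFunctions, Finset.mem_filter, Finset.mem_univ, true_and] at hf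
    obtain ⟨j, hj⟩ : ∃ j : Fin (N + 1), f j.succ = f 0 := by
      by_contra! h
      -- Otherwise the fiber through `0` is a singleton.
      have h0 := hf (f 0)
      rw [card_fiber_succAbove f 0] at h0
      simp [h] at h0
    refine Finset.mem_image.2 ⟨((j, f 0), fun x => f (j.succAbove x).succ), ?_, ?_⟩
    · simp only [evenFiberFunctions, Finset.mem_product, Finset.mem_filter, Finset.mem_univ,
        true_and]
      intro y
      have h0 := hf y
      have h1 : (Finset.univ.filter fun x => f x = y).card =
          (if f 0 = y then 1 else 0) + (Finset.univ.filter fun x : Fin (N + 1) => f x.succ = y).card := by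
        simp only [Finset.card_filter]
        rw [Fin.sum_univ_succ]
      have h2 := card_fiber_succAbove (fun x => f x.succ) j y
      simp only [hj] at h2
      rw [h1, h2, ← add_assoc, Nat.even_add] at h0
      exact h0.1 (by split_ifs <;> decide)
    · funext x
      refine Fin.cases (by simp) (fun x => ?_) x
      simp only [Fin.cons_succ]
      refine Fin.succAboveCases j (by simp [hj]) (fun x => by simp) x
  calc _ ≤ _ := Finset.card_le_card hsub
    _ ≤ _ := Finset.card_image_le
    _ = _ := by simp [Finset.card_product]

theorem card_evenFiberFunctions_le (n m : ℕ) :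
    (evenFiberFunctions (2 * n) m).card ≤ Nat.doubleFactorial (2 * n - 1) * m ^ n := by
  induction n with
  | zero => exact (Finset.card_le_univ _).trans (by simp)
  | succ n ih =>
    calc (evenFiberFunctions (2 * n + 2) m).card
        ≤ (2 * n + 1) * m * (evenFiberFunctions (2 * n) m).card :=
          card_evenFiberFunctions_add_two_le _ _
      _ ≤ (2 * n + 1) * m * (Nat.doubleFactorial (2 * n - 1) * m ^ n) := by gcongr
      _ = Nat.doubleFactorial (2 * n + 1) * m ^ (n + 1) := by
          rw [Nat.doubleFactorial_add_one]; ring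


/-- The number of functions from a set of size `2n` to a set of
size `m` all of whose fibers have even cardinality is at most
`(2n−1)!! · m^n`, where `!!` is the double factorial. Equivalently, if `2n`
balls are thrown independently and uniformly into `m` bins, the probability
that every bin gets an even number of balls is at most `(2n−1)!! · (1/m)^n`. -/
theorem even_fibers_count_bound
    (n m : ℕ) (hn : 0 < n) (hm : 0 < m) :
    (Finset.univ.filter fun f : Fin (2 * n) → Fin m =>
        ∀ y : Fin m, Even (Finset.univ.filter fun x : Fin (2 * n) => f x = y).card).card
      ≤ Nat.doubleFactorial (2 * n - 1) * m ^ n := by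
  exact card_evenFiberFunctions_le n m
end
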